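/- Let H be a complex Hilbert space and let A, B be strictly positive bounded operators on H with log A ≥ log B and m·I ≤ B ≤ M·I for some 0 < m < M. Fix p > 0 and put h := M/m, S := S(h^p) where S(h) := (h−1)·h^{1/(h−1)}/(e·log h) for h > 1, and C_add(m,M,p) := ((M^p − m^p)/(log M^p − log m^p))·log S. Then for every c ∈ [1, S] one has c·A^p + ((S − c)/(S − 1))·C_add(m,M,p)·I ≥ B^p. -/

import Mathlib

noncomputable section

open ContinuousLinearMap

variable {H : Type*} [NormedAddCommGroup H] [InnerProductSpace ℂ H] [CompleteSpace H]

/-- The operator logarithm, defined via the continuous functional calculus. -/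
def opLog (A : H →L[ℂ] H) : H →L[ℂ] H := cfc Real.log A

/-- The Fujii–Seo determinant `Δ_x(A) = exp (re⟪(log A) x, x⟫)` of a strictly positive
operator `A` at a vector `x`. -/
def fsDet (A : H →L[ℂ] H) (x : H) : ℝ :=
  Real.exp ((opLog A).reApplyInnerSelf x)

/-- The operator power `A^p`, defined via the continuous functional calculus. -/
def opPow (A : H →L[ℂ] H) (p : ℝ) : H →L[ℂ] H := cfc (fun t : ℝ => t ^ p) A

/-- Specht's ratio `S(h) = (h - 1) * h ^ (1 / (h - 1)) / (e * log h)` for `h ≠ 1`,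
with `S(1) = 1`. -/
def spechtRatio (h : ℝ) : ℝ :=
  if h = 1 then 1 else (h - 1) * h ^ ((1 : ℝ) / (h - 1)) / (Real.exp 1 * Real.log h)

/-- The additive constant
`C_p(m,M) = ((M^p - m^p)/(log M^p - log m^p)) * log S((M/m)^p)` for `m < M`,
and `C_p(m,m) = 0`. -/
def fsAddConstP (m M p : ℝ) : ℝ :=
  if m = M then 0
  else ((M ^ p - m ^ p) / (Real.log (M ^ p) - Real.log (m ^ p))) *
    Real.log (spechtRatio ((M / m) ^ p))

/-!
Put `L = (M ^ p - m ^ p) / (log M ^ p - log m ^ p)`, the logarithmic mean of `m ^ p` and `M ^ p`.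
On `[m ^ p, M ^ p]` the logarithm lies above its chord, that is, `x ≤ L * (log x + κ)` for a
constant `κ`, and Specht's ratio `S` is exactly the number that makes the right-hand side tangent
to the line `S * x`. Since `log` lies below its tangents,
`L * (log y + κ) ≤ c * y + L * log (S / c)` for all `c, y > 0`. Only `log` has to be compared
between the two elements, so the functional calculus gives
`b ^ p ≤ L * (p * log b + κ) ≤ L * (p * log a + κ) ≤ c * a ^ p + L * log (S / c)`.
Concavity of `log` on `[1, S]` finally bounds `log (S / c)` by `(S - c) / (S - 1) * log S`.
-/

section Scalar

variable {u v : ℝ}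

/-- The logarithmic mean `(v - u) / (log v - log u)` of two positive reals `u ≠ v`, the factor of
`log S` in `fsAddConstP`. On the diagonal the quotient is `0`, not the usual value `u`. -/
def logMean (u v : ℝ) : ℝ := (v - u) / (Real.log v - Real.log u)

lemma logMean_pos (hu : 0 < u) (huv : u < v) : 0 < logMean u v :=
  div_pos (sub_pos.2 huv) (sub_pos.2 (Real.log_lt_log hu huv))

lemma sub_le_logMean_mul_log_sub_log (hu : 0 < u) (huv : u < v) {x : ℝ} (hx : x ∈ Set.Icc u v) :
    x - u ≤ logMean u v * (Real.log x - Real.log u) := by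
  rcases hx.1.eq_or_lt with rfl | hux
  · simp
  have hslope : (Real.log v - Real.log u) / (v - u) ≤ (Real.log x - Real.log u) / (x - u) := by
    have := strictConcaveOn_log_Ioi.concaveOn.neg.secant_mono hu (hu.trans hux) (hu.trans huv)
      hux.ne' huv.ne' hx.2
    simp only [Pi.neg_apply] at this
    linear_combination this
  have hlog : 0 < Real.log v - Real.log u := sub_pos.2 (Real.log_lt_log hu huv)
  rw [div_le_div_iff₀ (sub_pos.2 huv) (sub_pos.2 hux)] at hslope
  rw [logMean, div_mul_eq_mul_div, le_div_iff₀ hlog]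
  linarith

lemma log_spechtRatio {h : ℝ} (hh : 0 < h) (hh1 : h ≠ 1) :
    Real.log (spechtRatio h) =
      Real.log ((h - 1) / Real.log h) + Real.log h / (h - 1) - 1 := by
  have hlog : Real.log h ≠ 0 := Real.log_ne_zero_of_pos_of_ne_one hh hh1
  have hsub : h - 1 ≠ 0 := sub_ne_zero.2 hh1
  rw [spechtRatio, if_neg hh1, mul_comm (Real.exp 1), ← div_mul_div_comm,
    Real.log_mul (div_ne_zero hsub hlog) (by positivity),
    Real.log_div (y := Real.exp 1) (by positivity) (by positivity), Real.log_rpow hh, Real.log_exp]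
  ring

lemma logMean_mul_log_spechtRatio (hu : 0 < u) (hv : 0 < v) (huv : u ≠ v) :
    logMean u v * Real.log (spechtRatio (v / u)) =
      u + logMean u v * (Real.log (logMean u v) - Real.log u - 1) := by
  have hlog : Real.log v - Real.log u ≠ 0 :=
    sub_ne_zero.2 fun h ↦ huv (Real.log_injOn_pos hu hv h.symm)
  have hL : logMean u v ≠ 0 := div_ne_zero (sub_ne_zero.2 huv.symm) hlog
  have hratio : (v / u - 1) / Real.log (v / u) = logMean u v / u := by
    rw [Real.log_div hv.ne' hu.ne', logMean]
    field_simp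
  rw [log_spechtRatio (div_pos hv hu) (div_ne_one_of_ne huv.symm), ← inv_div (v / u - 1), hratio,
    Real.log_div hL hu.ne']
  field_simp
  ring

lemma le_logMean_mul_log_add (hu : 0 < u) (huv : u < v) {x : ℝ} (hx : x ∈ Set.Icc u v) :
    x ≤ logMean u v *
      (Real.log x + (Real.log (spechtRatio (v / u)) + 1 - Real.log (logMean u v))) := by
  linarith [sub_le_logMean_mul_log_sub_log hu huv hx,
    logMean_mul_log_spechtRatio hu (hu.trans huv) huv.ne]

lemma mul_log_add_one_sub_log_le {α x : ℝ} (hα : 0 < α) (hx : 0 < x) :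
    α * (Real.log x + 1 - Real.log α) ≤ x := by
  have htangent := Real.log_le_sub_one_of_pos (div_pos hx hα)
  rw [Real.log_div hx.ne' hα.ne', le_sub_iff_add_le, le_div_iff₀ hα] at htangent
  linarith

lemma log_sub_log_le_div_mul_log {c S : ℝ} (hc : 1 ≤ c) (hcS : c ≤ S) :
    Real.log S - Real.log c ≤ (S - c) / (S - 1) * Real.log S := by
  rcases (hc.trans hcS).eq_or_lt with rfl | hS
  · simp [le_antisymm hcS hc]
  have hchord := sub_le_logMean_mul_log_sub_log one_pos hS ⟨hc, hcS⟩
  rw [logMean, Real.log_one, sub_zero, sub_zero, div_mul_eq_mul_div,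
    le_div_iff₀ (Real.log_pos hS)] at hchord
  rw [div_mul_eq_mul_div, le_div_iff₀ (sub_pos.2 hS)]
  linarith

end Scalar

lemma fsAddConstP_eq_logMean_mul {m M : ℝ} (hmM : m ≠ M) (p : ℝ) :
    fsAddConstP m M p = logMean (m ^ p) (M ^ p) * Real.log (spechtRatio ((M / m) ^ p)) := by
  rw [fsAddConstP, if_neg hmM, logMean]

section FunctionalCalculus

variable {𝓐 : Type*} [NormedRing 𝓐] [StarRing 𝓐] [NormedAlgebra ℝ 𝓐]
  [ContinuousFunctionalCalculus ℝ 𝓐 IsSelfAdjoint]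

lemma cfc_const_mul_add_const {f : ℝ → ℝ} {a : 𝓐} (α β : ℝ) (ha : IsSelfAdjoint a)
    (hf : ContinuousOn f (spectrum ℝ a)) :
    cfc (fun t ↦ α * f t + β) a = α • cfc f a + β • 1 := by
  rw [cfc_add_const β _ a, cfc_const_mul α f a, Algebra.algebraMap_eq_smul_one]

variable [PartialOrder 𝓐] [StarOrderedRing 𝓐]

lemma cfc_le_cfc_of_le_affine_of_affine_le [StarModule ℝ 𝓐] {f g φ : ℝ → ℝ} {a b : 𝓐} {α β : ℝ}
    (ha : IsSelfAdjoint a) (hb : IsSelfAdjoint b) (hα : 0 ≤ α) (hφ : cfc φ b ≤ cfc φ a)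
    (hfφ : ∀ t ∈ spectrum ℝ b, f t ≤ α * φ t + β) (hφg : ∀ t ∈ spectrum ℝ a, α * φ t + β ≤ g t)
    (hf : ContinuousOn f (spectrum ℝ b)) (hg : ContinuousOn g (spectrum ℝ a))
    (hφa : ContinuousOn φ (spectrum ℝ a)) (hφb : ContinuousOn φ (spectrum ℝ b)) :
    cfc f b ≤ cfc g a :=
  calc
    cfc f b ≤ cfc (fun t ↦ α * φ t + β) b := cfc_mono hfφ
    _ = α • cfc φ b + β • 1 := cfc_const_mul_add_const α β hb hφb
    _ ≤ α • cfc φ a + β • 1 := by gcongr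
    _ = cfc (fun t ↦ α * φ t + β) a := (cfc_const_mul_add_const α β ha hφa).symm
    _ ≤ cfc g a := cfc_mono hφg

variable [NonnegSpectrumClass ℝ 𝓐] {a b : 𝓐} {m M p c : ℝ}

lemma spectrum_subset_Icc (hb : IsSelfAdjoint b) (hlow : m • 1 ≤ b) (hupp : b ≤ M • 1) :
    spectrum ℝ b ⊆ Set.Icc m M := by
  rw [← Algebra.algebraMap_eq_smul_one] at hlow hupp
  exact fun t ht ↦ ⟨(algebraMap_le_iff_le_spectrum hb).1 hlow t ht,
    (le_algebraMap_iff_spectrum_le hb).1 hupp t ht⟩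

variable [StarModule ℝ 𝓐]

theorem rpow_le_smul_rpow_add_logMean_mul_log_sub_log (hm : 0 < m) (hmM : m < M) (hp : 0 < p)
    (hc : 0 < c) (ha : IsStrictlyPositive a) (hlog : CFC.log b ≤ CFC.log a)
    (hlow : m • 1 ≤ b) (hupp : b ≤ M • 1) :
    b ^ p ≤ c • a ^ p + (logMean (m ^ p) (M ^ p) *
      (Real.log (spechtRatio ((M / m) ^ p)) - Real.log c)) • 1 := by
  have hb : 0 ≤ b := (smul_nonneg hm.le zero_le_one).trans hlow
  have hspec := spectrum_subset_Icc hb.isSelfAdjoint hlow hupp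
  have hbpos : ∀ t ∈ spectrum ℝ b, 0 < t := fun t ht ↦ hm.trans_le (hspec ht).1
  have hmp : 0 < m ^ p := Real.rpow_pos_of_pos hm p
  have hmMp : m ^ p < M ^ p := Real.rpow_lt_rpow hm.le hmM hp
  rw [Real.div_rpow (hm.trans hmM).le hm.le]
  set L := logMean (m ^ p) (M ^ p)
  set S := spechtRatio (M ^ p / m ^ p)
  have hL : 0 < L := logMean_pos hmp hmMp
  have hchord : ∀ t ∈ spectrum ℝ b,
      t ^ p ≤ L * p * Real.log t + L * (Real.log S + 1 - Real.log L) := fun t ht ↦ by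
    have ht0 := hbpos t ht
    have := le_logMean_mul_log_add hmp hmMp
      ⟨Real.rpow_le_rpow hm.le (hspec ht).1 hp.le, Real.rpow_le_rpow ht0.le (hspec ht).2 hp.le⟩
    rw [Real.log_rpow ht0] at this
    linarith
  have htangent : ∀ t ∈ spectrum ℝ a, L * p * Real.log t + L * (Real.log S + 1 - Real.log L) ≤
      c * t ^ p + L * (Real.log S - Real.log c) := fun t ht ↦ by
    have ht0 : 0 < t := ha.spectrum_pos ht
    have := mul_log_add_one_sub_log_le hL (mul_pos hc (Real.rpow_pos_of_pos ht0 p))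
    rw [Real.log_mul hc.ne' (by positivity), Real.log_rpow ht0] at this
    linarith
  have hcont : ContinuousOn (fun t : ℝ ↦ t ^ p) (spectrum ℝ a) := by
    fun_prop (disch := grind)
  rw [CFC.rpow_eq_cfc_real hb, CFC.rpow_eq_cfc_real ha.nonneg,
    ← cfc_const_mul_add_const c _ ha.isSelfAdjoint hcont]
  exact cfc_le_cfc_of_le_affine_of_affine_le ha.isSelfAdjoint hb.isSelfAdjoint (mul_pos hL hp).le
    hlog hchord htangent (by fun_prop (disch := grind)) (by fun_prop (disch := grind))
    (by fun_prop (disch := grind)) (by fun_prop (disch := grind))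

theorem mixed_kantorovich_specht_bound_general (hm : 0 < m) (hmM : m < M) (hp : 0 < p)
    (ha : IsStrictlyPositive a) (hlog : CFC.log b ≤ CFC.log a)
    (hlow : m • 1 ≤ b) (hupp : b ≤ M • 1) (hc : 1 ≤ c) (hcS : c ≤ spechtRatio ((M / m) ^ p)) :
    b ^ p ≤ c • a ^ p + ((spechtRatio ((M / m) ^ p) - c) / (spechtRatio ((M / m) ^ p) - 1) *
      fsAddConstP m M p) • 1 := by
  have hL : 0 < logMean (m ^ p) (M ^ p) :=
    logMean_pos (Real.rpow_pos_of_pos hm p) (Real.rpow_lt_rpow hm.le hmM hp)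
  grw [rpow_le_smul_rpow_add_logMean_mul_log_sub_log hm hmM hp (one_pos.trans_le hc) ha hlog
    hlow hupp, log_sub_log_le_div_mul_log hc hcS]
  rw [fsAddConstP_eq_logMean_mul hmM.ne, mul_left_comm]

end FunctionalCalculus

lemma opPow_eq_rpow {A : H →L[ℂ] H} (hA : A.IsPositive) (p : ℝ) : opPow A p = A ^ p :=
  (CFC.rpow_eq_cfc_real ((nonneg_iff_isPositive A).2 hA)).symm

/-- Mixed additive–multiplicative Kantorovich–Specht bound: if
`log A ≥ log B` and `m • I ≤ B ≤ M • I` with `0 < m < M`, then for `p > 0` and every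
`c ∈ [1, S((M/m)^p)]` one has `c • A^p + ((S - c)/(S - 1)) * C_add(m,M,p) • I ≥ B^p`. -/
theorem mixed_kantorovich_specht_bound
    (A B : H →L[ℂ] H) (m M p : ℝ) (hm : 0 < m) (hmM : m < M) (hp : 0 < p)
    (hA : A.IsPositive) (hAu : IsUnit A) (hB : B.IsPositive) (hBu : IsUnit B)
    (hlog : (opLog A - opLog B).IsPositive)
    (hlow : (B - m • 1).IsPositive) (hupp : (M • 1 - B).IsPositive) :
    ∀ c : ℝ, 1 ≤ c → c ≤ spechtRatio ((M / m) ^ p) →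
      (((c • opPow A p) +
        (((spechtRatio ((M / m) ^ p) - c) / (spechtRatio ((M / m) ^ p) - 1)) *
          fsAddConstP m M p) • 1) - opPow B p).IsPositive := by
  intro c hc hcS
  rw [opPow_eq_rpow hA, opPow_eq_rpow hB]
  exact mixed_kantorovich_specht_bound_general hm hmM hp
    (hAu.isStrictlyPositive ((nonneg_iff_isPositive A).2 hA)) hlog hlow hupp hc hcS
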